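/- Let V = ℝ^d with d ≥ 2 and let C be a compact connected subgroup of GL(d,ℝ) such that the only vector v ∈ V fixed by every element of C is v = 0. Let λ be a Borel probability measure on V invariant under every element of C, and suppose that λ(W) = 0 for every proper vector subspace W of V. Then the d-fold convolution power λ^d = λ∗⋯∗λ (d times) is absolutely continuous with respect to Lebesgue measure on ℝ^d. -/

import Mathlib

/-!
Let `𝔠` be the set of matrices `X` with `exp (t X) ∈ C` for all `t`, and let `v 1, …, v d` be
independent with law `lam`; the claim is that the law of `∑ i, v i` is absolutely continuous.

If `X i ∈ 𝔠`, the maps `v ↦ (exp (t i X i) v i)` preserve the joint law for every `t ∈ ℝ^d`, so `t`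
may be averaged out. The map `t ↦ ∑ i, exp (t i X i) v i` has partial derivatives
`X i exp (t i X i) v i`, and it pulls null sets back to null sets wherever these are independent
(`volume_preimage_null`). By Fubini, the sum almost surely avoids a given null set on the event that
the `X i v i` are independent (`pi_null_of_linearIndependent`).

These events, with the `X i` in a finite subset of `𝔠` having the same span, cover almost
everything (`ae_exists_linearIndependent`): if `W ≠ V` is the span of the first few
`X i v i`, then `{v | 𝔠 v ⊆ W}` is a subspace, and it is proper because `𝔠 V` spans `V`
(`exists_mulVec_notMem`), so `lam` does not charge it.

That `𝔠 V` spans `V` is where compactness, connectedness and the absence of fixed vectors enter. A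
functional vanishing on `𝔠 V` is fixed by a neighbourhood of `1` in `C`
(`eventually_map_eq_map_one`), hence by `C`, and then Haar averaging yields a nonzero fixed vector.
The local statement is the part of the closed subgroup theorem that is needed: limits of
normalised displacements of elements of `C` tending to `1` lie in `𝔠`
(`mem_oneParamGen_of_tendsto`), and such limits are taken along elements closest to `1` in the
fibres of the action on the functional.
-/

open MeasureTheory Matrix

/-- `n`-fold convolution power of a measure on an additive monoid:
`addConvPow μ 0 = δ_0` and `addConvPow μ (n+1) = μ ∗ (addConvPow μ n)`. -/
noncomputable def addConvPow {V : Type*} [AddMonoid V] [MeasurableSpace V]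
    (μ : Measure V) : ℕ → Measure V
  | 0 => Measure.dirac 0
  | n + 1 => ((μ.prod (addConvPow μ n)).map fun p : V × V => p.1 + p.2)

/-! ### One-parameter subgroups of a compact group -/

section OneParameter
open Filter Topology

variable {E : Type*} [NormedRing E]

/-- Telescoping bound, linear in the number of factors; the extra factor `b ^ k` makes the induction
work without `a` and `b` commuting. -/
theorem norm_pow_sub_pow_le {M M' : ℝ} (a b : E) (m k : ℕ) (hM : 0 ≤ M)
    (ha : ∀ j, ‖a ^ j‖ ≤ M) (hb : ∀ j ≤ m + k, ‖b ^ j‖ ≤ M') :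
    ‖(a ^ m - b ^ m) * b ^ k‖ ≤ m * (M * M' * ‖a - b‖) := by
  induction m generalizing k with
  | zero => simp
  | succ m ih =>
    have e : (a ^ (m + 1) - b ^ (m + 1)) * b ^ k
        = a ^ m * (a - b) * b ^ k + (a ^ m - b ^ m) * b ^ (k + 1) := by
      rw [pow_succ a, pow_succ b, pow_succ' b k]; noncomm_ring
    have h1 : ‖a ^ m * (a - b) * b ^ k‖ ≤ M * ‖a - b‖ * M' :=
      (norm_mul_le _ _).trans (mul_le_mul ((norm_mul_le _ _).trans
        (mul_le_mul_of_nonneg_right (ha m) (norm_nonneg _))) (hb k (by omega))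
        (norm_nonneg _) (by positivity))
    have h2 := ih (k + 1) (fun j hj => hb j (by omega))
    rw [e]
    push_cast
    linarith [norm_add_le (a ^ m * (a - b) * b ^ k) ((a ^ m - b ^ m) * b ^ (k + 1))]

variable [NormedAlgebra ℝ E]

/-- The generators of the one-parameter subgroups `t ↦ exp (t X)` lying in `C`, i.e. the Lie
algebra of `C` as a bare set. -/
def oneParamGen (C : Subgroup Eˣ) : Set E :=
  {X | ∀ t : ℝ, ∃ g ∈ C, (g : E) = NormedSpace.exp (t • X)}

theorem exp_zero_smul (X : E) : NormedSpace.exp ((0 : ℝ) • X) = 1 := by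
  let _ := NormedAlgebra.restrictScalars ℚ ℝ E
  simp [NormedSpace.exp_zero]

variable [CompleteSpace E]

theorem exp_add_smul (X : E) (s t : ℝ) :
    NormedSpace.exp ((s + t) • X) = NormedSpace.exp (s • X) * NormedSpace.exp (t • X) := by
  let _ := NormedAlgebra.restrictScalars ℚ ℝ E
  rw [add_smul]
  exact NormedSpace.exp_add_of_commute (((Commute.refl X).smul_left s).smul_right t)

theorem exp_smul_pow (X : E) (s : ℝ) (m : ℕ) :
    NormedSpace.exp (s • X) ^ m = NormedSpace.exp (((m : ℝ) * s) • X) := by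
  induction m with
  | zero => rw [Nat.cast_zero, zero_mul, exp_zero_smul, pow_zero]
  | succ m ih => rw [pow_succ, ih, ← exp_add_smul]; congr 2; push_cast; ring

theorem continuous_exp_smul (X : E) :
    Continuous fun t : ℝ => NormedSpace.exp (t • X) :=
  continuous_iff_continuousAt.2 fun t =>
    (hasStrictDerivAt_exp_smul_const' X t).hasDerivAt.continuousAt

theorem tendsto_exp_sub_one_div (X : E) {ε : ℕ → ℝ} (h0 : Tendsto ε atTop (𝓝 0))
    (hne : ∀ n, ε n ≠ 0) :
    Tendsto (fun n => (ε n)⁻¹ • (NormedSpace.exp (ε n • X) - 1)) atTop (𝓝 X) := by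
  have h := (hasStrictDerivAt_exp_smul_const' X (0 : ℝ)).hasDerivAt
  rw [hasDerivAt_iff_tendsto_slope_zero, exp_zero_smul, mul_one] at h
  have h' := h.comp (tendsto_nhdsWithin_iff.2 ⟨h0, Eventually.of_forall hne⟩)
  simpa [Function.comp_def] using h'

/-- A limit of normalised displacements `(h n - 1) / ‖h n - 1‖` of elements of a compact group
generates a one-parameter subgroup: `h n ^ ⌊t / ‖h n - 1‖⌋` tends to `exp (t X)`. -/
theorem mem_oneParamGen_of_tendsto {C : Subgroup Eˣ}
    (hC : IsCompact (Units.val '' (C : Set Eˣ))) {h : ℕ → E} {X : E}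
    (hmem : ∀ n, h n ∈ Units.val '' (C : Set Eˣ)) (hne : ∀ n, h n ≠ 1)
    (hlim : Tendsto h atTop (𝓝 1))
    (hX : Tendsto (fun n => ‖h n - 1‖⁻¹ • (h n - 1)) atTop (𝓝 X)) :
    X ∈ oneParamGen C := by
  have key : ∀ t : ℝ, 0 ≤ t → NormedSpace.exp (t • X) ∈ Units.val '' (C : Set Eˣ) := by
    intro t ht
    set ε : ℕ → ℝ := fun n => ‖h n - 1‖ with hε
    have εpos : ∀ n, 0 < ε n := fun n => norm_pos_iff.2 (sub_ne_zero.2 (hne n))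
    have ε0 : Tendsto ε atTop (𝓝 0) := by
      have := (hlim.sub_const 1).norm
      simpa using this
    have εinv : Tendsto (fun n => (ε n)⁻¹) atTop atTop :=
      tendsto_inv_nhdsGT_zero.comp
        (tendsto_nhdsWithin_iff.2 ⟨ε0, Eventually.of_forall εpos⟩)
    -- `m n` displacements of length `ε n` add up to time `t` in the limit.
    set m : ℕ → ℕ := fun n => ⌊t * (ε n)⁻¹⌋₊ with hm
    have hmt : Tendsto (fun n => (m n : ℝ) * ε n) atTop (𝓝 t) := by
      have := (tendsto_nat_floor_mul_div_atTop ht).comp εinv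
      simpa [Function.comp_def, div_eq_mul_inv] using this
    have hmle : ∀ n, (m n : ℝ) * ε n ≤ t := by
      intro n
      have := Nat.floor_le (mul_nonneg ht (inv_pos.2 (εpos n)).le)
      calc (m n : ℝ) * ε n ≤ t * (ε n)⁻¹ * ε n :=
            mul_le_mul_of_nonneg_right this (εpos n).le
        _ = t := by rw [mul_assoc, inv_mul_cancel₀ (εpos n).ne', mul_one]
    obtain ⟨M, hM⟩ := hC.isBounded.exists_norm_le
    obtain ⟨M', hM'⟩ := (isCompact_Icc (a := (0 : ℝ)) (b := t)).exists_bound_of_continuousOn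
      (continuous_exp_smul X).continuousOn
    have hpow : ∀ n j, h n ^ j ∈ Units.val '' (C : Set Eˣ) := by
      intro n j
      obtain ⟨g, hg, e⟩ := hmem n
      exact ⟨g ^ j, C.pow_mem hg j, by rw [Units.val_pow_eq_pow_val, e]⟩
    have hM0 : 0 ≤ M := (norm_nonneg _).trans (hM _ (hpow 0 0))
    have hM'0 : 0 ≤ M' := (norm_nonneg _).trans (hM' 0 ⟨le_rfl, ht⟩)
    have hdiff : Tendsto (fun n => (ε n)⁻¹ * ‖h n - NormedSpace.exp (ε n • X)‖) atTop (𝓝 0) := by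
      have := (hX.sub (tendsto_exp_sub_one_div X ε0 fun n => (εpos n).ne')).norm
      rw [sub_self, norm_zero] at this
      refine this.congr fun n => ?_
      rw [← smul_sub, sub_sub_sub_cancel_right, norm_smul, Real.norm_eq_abs,
        abs_of_pos (inv_pos.2 (εpos n))]
    have hbound : ∀ n, ‖h n ^ m n - NormedSpace.exp (((m n : ℝ) * ε n) • X)‖
        ≤ t * M * M' * ((ε n)⁻¹ * ‖h n - NormedSpace.exp (ε n • X)‖) := by
      intro n
      have h1 := norm_pow_sub_pow_le (M := M) (M' := M') (h n) (NormedSpace.exp (ε n • X))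
        (m n) 0 hM0 (fun j => hM _ (hpow n j)) (fun j hj => by
          rw [exp_smul_pow]
          refine hM' _ ⟨mul_nonneg (Nat.cast_nonneg _) (εpos n).le, le_trans ?_ (hmle n)⟩
          exact mul_le_mul_of_nonneg_right (by exact_mod_cast hj) (εpos n).le)
      rw [pow_zero, mul_one, exp_smul_pow] at h1
      refine h1.trans ?_
      have h2 : (m n : ℝ) ≤ t * (ε n)⁻¹ := Nat.floor_le (mul_nonneg ht (inv_pos.2 (εpos n)).le)
      calc _ ≤ t * (ε n)⁻¹ * (M * M' * ‖h n - NormedSpace.exp (ε n • X)‖) :=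
            mul_le_mul_of_nonneg_right h2 (by positivity)
        _ = _ := by ring
    have hz : Tendsto (fun n => h n ^ m n - NormedSpace.exp (((m n : ℝ) * ε n) • X))
        atTop (𝓝 0) := by
      refine squeeze_zero_norm hbound ?_
      simpa using hdiff.const_mul (t * M * M')
    have hfin : Tendsto (fun n => h n ^ m n) atTop (𝓝 (NormedSpace.exp (t • X))) := by
      have := hz.add (((continuous_exp_smul X).tendsto t).comp hmt)
      simpa [Function.comp_def] using this
    exact hC.isClosed.mem_of_tendsto hfin (Eventually.of_forall fun n => hpow n (m n))
  intro t
  rcases le_total 0 t with ht | ht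
  · exact key t ht
  -- Negative times: invert in the group.
  · obtain ⟨g, hg, e⟩ := key (-t) (by linarith)
    refine ⟨g⁻¹, C.inv_mem hg, ?_⟩
    exact Units.inv_eq_of_mul_eq_one_right (by
      rw [e, ← exp_add_smul, neg_add_cancel, exp_zero_smul])

theorem map_exp_mul_of_map_mul_eq_zero {F : Type*} [NormedAddCommGroup F] [NormedSpace ℝ F]
    (L : E →L[ℝ] F) {X : E} (hL : ∀ h, L (X * h) = 0) (t : ℝ) (h : E) :
    L (NormedSpace.exp (t • X) * h) = L h := by
  have hd : ∀ s : ℝ, HasDerivAt (fun s : ℝ => L (NormedSpace.exp (s • X) * h)) 0 s := by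
    intro s
    have := L.hasFDerivAt.comp_hasDerivAt s
      ((hasStrictDerivAt_exp_smul_const' X s).hasDerivAt.mul_const h)
    rwa [mul_assoc, hL] at this
  have := is_const_of_deriv_eq_zero (fun s => (hd s).differentiableAt)
    (fun s => (hd s).deriv) t 0
  simpa only [exp_zero_smul, one_mul] using this

/-- A linear map killed by all `X * ·`, `X` a generator, is constant on `C` near `1`.
Otherwise pick, in fibres of `L` over values different from `L 1`, elements `h n → 1` of `C`
closest to `1`; their displacements have a limit direction `X`, which is a generator, and
`exp (-‖h n - 1‖ X) * h n` lies in the same fibre and is closer to `1`. -/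
theorem eventually_map_eq_map_one [FiniteDimensional ℝ E] {F : Type*} [NormedAddCommGroup F]
    [NormedSpace ℝ F] {C : Subgroup Eˣ}
    (hC : IsCompact (Units.val '' (C : Set Eˣ))) (L : E →L[ℝ] F)
    (hL : ∀ X ∈ oneParamGen C, ∀ h, L (X * h) = 0) :
    ∀ᶠ g in 𝓝[Units.val '' (C : Set Eˣ)] (1 : E), L g = L 1 := by
  set K := Units.val '' (C : Set Eˣ) with hK
  by_contra hcon
  obtain ⟨g, hg1, hg⟩ := exists_seq_forall_of_frequently (not_eventually.1 hcon |>.and_eventually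
    self_mem_nhdsWithin)
  have hmin : ∀ n, ∃ h ∈ K ∩ {h | L h = L (g n)}, IsMinOn (fun h => ‖h - 1‖)
      (K ∩ {h | L h = L (g n)}) h := fun n =>
    (hC.inter_right (isClosed_eq L.continuous continuous_const)).exists_isMinOn
      ⟨g n, (hg n).2, rfl⟩ (by fun_prop)
  choose h hmem hmin using hmin
  have hne : ∀ n, h n ≠ 1 := fun n e => (hg n).1 (by rw [← (hmem n).2, e])
  have hlim0 : Tendsto (fun n => ‖h n - 1‖) atTop (𝓝 0) := by
    have hg0 : Tendsto (fun n => ‖g n - 1‖) atTop (𝓝 0) := by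
      simpa using ((hg1.mono_right nhdsWithin_le_nhds).sub_const 1).norm
    exact squeeze_zero (fun _ => norm_nonneg _) (fun n => hmin n ⟨(hg n).2, rfl⟩) hg0
  have hlim : Tendsto h atTop (𝓝 1) := tendsto_iff_norm_sub_tendsto_zero.2 hlim0
  have hpos : ∀ n, 0 < ‖h n - 1‖ := fun n => norm_pos_iff.2 (sub_ne_zero.2 (hne n))
  have : ProperSpace E := FiniteDimensional.proper ℝ E
  obtain ⟨X, -, φ, hφ, hX⟩ := (isCompact_sphere (0 : E) 1).tendsto_subseq
    (x := fun n => ‖h n - 1‖⁻¹ • (h n - 1)) (fun n => by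
      rw [mem_sphere_zero_iff_norm, norm_smul, norm_inv, norm_norm,
        inv_mul_cancel₀ (hpos n).ne'])
  set ε : ℕ → ℝ := fun n => ‖h (φ n) - 1‖ with hε
  have hε0 : Tendsto ε atTop (𝓝 0) := hlim0.comp hφ.tendsto_atTop
  have hXmem : X ∈ oneParamGen C := mem_oneParamGen_of_tendsto hC (h := h ∘ φ)
    (fun n => (hmem _).1) (fun n => hne _) (hlim.comp hφ.tendsto_atTop) hX
  -- Moving back along `X` stays in the fibre, so it cannot get closer to `1` ...
  have hle : ∀ n, ε n ≤ ‖NormedSpace.exp ((-ε n) • X) * h (φ n) - 1‖ := by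
    intro n
    refine hmin (φ n) ⟨?_, ?_⟩
    · obtain ⟨a, ha, ea⟩ := hXmem (-ε n)
      obtain ⟨b, hb, eb⟩ := (hmem (φ n)).1
      exact ⟨a * b, C.mul_mem ha hb, by rw [Units.val_mul, ea, eb]⟩
    · change L _ = _
      rw [map_exp_mul_of_map_mul_eq_zero L (hL X hXmem), (hmem (φ n)).2]
  have hεne : ∀ n, ε n ≠ 0 := fun n => (hpos _).ne'
  -- ... although it cancels the displacement to first order.
  have h1 := tendsto_exp_sub_one_div X (ε := fun n => -ε n) (by simpa using hε0.neg)
    (fun n => neg_ne_zero.2 (hεne n))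
  have h2 : Tendsto (fun n => NormedSpace.exp ((-ε n) • X)) atTop (𝓝 1) := by
    have := ((continuous_exp_smul X).tendsto 0).comp (by simpa using hε0.neg)
    rwa [exp_zero_smul] at this
  have h3 := ((h2.mul hX).sub h1).norm
  rw [one_mul, sub_self, norm_zero] at h3
  have h4 : ∀ n, (1 : ℝ) ≤ ‖NormedSpace.exp ((-ε n) • X) *
      (((fun n => ‖h n - 1‖⁻¹ • (h n - 1)) ∘ φ) n)
      - (-ε n)⁻¹ • (NormedSpace.exp ((-ε n) • X) - 1)‖ := by
    intro n
    have e : NormedSpace.exp ((-ε n) • X) *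
      (((fun n => ‖h n - 1‖⁻¹ • (h n - 1)) ∘ φ) n)
      - (-ε n)⁻¹ • (NormedSpace.exp ((-ε n) • X) - 1)
      = (ε n)⁻¹ • (NormedSpace.exp ((-ε n) • X) * h (φ n) - 1) := by
      change _ * ((ε n)⁻¹ • _) - _ = _
      rw [mul_smul_comm, inv_neg, neg_smul (ε n)⁻¹, sub_neg_eq_add, ← smul_add]
      congr 1
      noncomm_ring
    rw [e, norm_smul, norm_inv, Real.norm_of_nonneg (hpos (φ n)).le]
    rw [le_inv_mul_iff₀ (hpos _), mul_one]
    exact hle n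
  exact absurd (ge_of_tendsto' h3 h4) (by norm_num)

end OneParameter

/-! ### Preimages of null sets and convolution powers -/

section MeasureTools
open Filter Topology

variable {E : Type*} [NormedAddCommGroup E] [NormedSpace ℝ E] [FiniteDimensional ℝ E]
  [MeasurableSpace E] [BorelSpace E]

/-- The part of the preimage of a null set on which the derivative is invertible is null:
the map is injective near each such point, where the change of variables formula applies. -/
theorem volume_preimage_null {μ : Measure E} [μ.IsAddHaarMeasure] {f : E → E}
    {f' : E → E →L[ℝ] E} (hf : ∀ x, HasStrictFDerivAt f (f' x) x) {A S : Set E}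
    (hA : μ A = 0) (hS : MeasurableSet S) (hSA : ∀ x ∈ S, f x ∈ A)
    (hdet : ∀ x ∈ S, (f' x).det ≠ 0) : μ S = 0 := by
  refine measure_null_of_locally_null S fun x hx => ?_
  have hs : HasStrictFDerivAt f
      ((f' x).toContinuousLinearEquivOfDetNeZero (hdet x hx) : E →L[ℝ] E) x := by
    simpa using hf x
  have : CompleteSpace E := FiniteDimensional.complete ℝ E
  set e := hs.toOpenPartialHomeomorph f
  refine ⟨S ∩ e.source, inter_mem_nhdsWithin S (e.open_source.mem_nhds
    hs.mem_toOpenPartialHomeomorph_source), ?_⟩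
  have hms : MeasurableSet (S ∩ e.source) := hS.inter e.open_source.measurableSet
  have hinj : Set.InjOn f (S ∩ e.source) := e.injOn.mono Set.inter_subset_right
  have hint := lintegral_abs_det_fderiv_eq_addHaar_image μ hms
    (fun y _ => (hf y).hasFDerivAt.hasFDerivWithinAt) hinj
  rw [measure_mono_null (by rintro _ ⟨y, hy, rfl⟩; exact hSA y hy.1) hA] at hint
  by_contra hne
  rw [setLIntegral_eq_zero_iff' hms (aemeasurable_ofReal_abs_det_fderivWithin μ hms
    fun y _ => (hf y).hasFDerivAt.hasFDerivWithinAt)] at hint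
  refine hne (measure_mono_null (fun y hy => ?_) hint)
  simp only [Set.mem_compl_iff, Set.mem_ofPred_eq]
  intro h
  exact hdet y hy.1 (abs_nonpos_iff.1 (ENNReal.ofReal_eq_zero.1 (h hy)))

theorem addConvPow_eq_map_pi {V : Type*} [AddCommMonoid V] [MeasurableSpace V] [MeasurableAdd₂ V]
    (μ : Measure V) [SigmaFinite μ] (n : ℕ) :
    addConvPow μ n = (Measure.pi fun _ : Fin n => μ).map fun v => ∑ i, v i := by
  induction n with
  | zero =>
    rw [Measure.pi_of_empty (fun _ : Fin 0 => μ) (fun i => Fin.elim0 i)]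
    simp [addConvPow]
  | succ n ih =>
    have hsum : ∀ n, Measurable fun v : Fin n → V => ∑ i, v i := fun n => by fun_prop
    have h := measurePreserving_piFinSuccAbove (fun _ : Fin (n + 1) => μ) 0
    have e : (fun v : Fin (n + 1) → V => ∑ i, v i)
        = (fun p : V × (Fin n → V) => p.1 + ∑ i, p.2 i) ∘
          (MeasurableEquiv.piFinSuccAbove (fun _ : Fin (n + 1) => V) 0) := by
      ext v
      simp [Fin.sum_univ_succ, MeasurableEquiv.piFinSuccAbove, Fin.tail]
    rw [e, ← Measure.map_map (by fun_prop) h.measurable, h.map_eq]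
    rw [addConvPow, ih]
    have := Measure.map_prod_map μ (Measure.pi fun _ : Fin n => μ) measurable_id (hsum n)
    rw [Measure.map_id] at this
    rw [this, Measure.map_map (by fun_prop) (by fun_prop)]
    rfl

end MeasureTools

/-! ### Generators acting on vectors -/

section LinearGroup
open Filter Topology

-- The row-sum operator norm makes the matrices a normed algebra, with the same topology.
attribute [local instance] Matrix.linftyOpNormedRing Matrix.linftyOpNormedAlgebra

variable {d : ℕ}

/-- A functional killed by all generators is fixed near `1`, so its stabiliser in the connected
group `C` is open, hence everything. -/
theorem vecMul_eq_of_oneParamGen {C : Subgroup (GL (Fin d) ℝ)}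
    (hC : IsCompact (C : Set (GL (Fin d) ℝ))) (hconn : IsConnected (C : Set (GL (Fin d) ℝ)))
    {f : Fin d → ℝ}
    (hf : ∀ X ∈ oneParamGen C, f ᵥ* (X : Matrix (Fin d) (Fin d) ℝ) = 0) :
    ∀ g ∈ C, f ᵥ* (g : Matrix (Fin d) (Fin d) ℝ) = f := by
  have hK : IsCompact (Units.val '' (C : Set (GL (Fin d) ℝ))) := hC.image Units.continuous_val
  let L : Matrix (Fin d) (Fin d) ℝ →L[ℝ] (Fin d → ℝ) :=
    LinearMap.toContinuousLinearMap
      { toFun := fun M => f ᵥ* M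
        map_add' := fun M N => Matrix.vecMul_add M N f
        map_smul' := fun c M => Matrix.vecMul_smul f c M }
  have hev := eventually_map_eq_map_one hK L (fun X hX h => by
    change f ᵥ* (X * h) = 0
    rw [← Matrix.vecMul_vecMul, hf X hX, Matrix.zero_vecMul])
  let S : Subgroup C :=
    { carrier := {g | f ᵥ* ((g : GL (Fin d) ℝ) : Matrix (Fin d) (Fin d) ℝ) = f}
      mul_mem' := by
        intro a b ha hb
        simp only [Set.mem_ofPred_eq, Subgroup.coe_mul, Units.val_mul] at *
        rw [← Matrix.vecMul_vecMul, ha, hb]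
      one_mem' := by simp
      inv_mem' := by
        intro a ha
        simp only [Set.mem_ofPred_eq] at *
        conv_lhs => rw [← ha]
        rw [Matrix.vecMul_vecMul, ← Units.val_mul, InvMemClass.coe_inv, mul_inv_cancel]
        simp }
  have hmem : (S : Set C) ∈ 𝓝 (1 : C) := by
    have ht : Tendsto (fun g : C => ((g : GL (Fin d) ℝ) : Matrix (Fin d) (Fin d) ℝ)) (𝓝 1)
        (𝓝[Units.val '' (C : Set (GL (Fin d) ℝ))] 1) :=
      tendsto_nhdsWithin_iff.2 ⟨(Units.continuous_val.comp continuous_subtype_val).tendsto' _ _ rfl,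
        Eventually.of_forall fun g => ⟨g, g.2, rfl⟩⟩
    filter_upwards [ht.eventually hev] with g hg
    change f ᵥ* _ = f ᵥ* 1 at hg
    rwa [Matrix.vecMul_one] at hg
  have hopen := S.isOpen_of_mem_nhds hmem
  have : PreconnectedSpace C := Subtype.preconnectedSpace hconn.isPreconnected
  have huniv := IsClopen.eq_univ ⟨S.isClosed_of_isOpen hopen, hopen⟩ ⟨1, S.one_mem⟩
  intro g hg
  have : (⟨g, hg⟩ : C) ∈ (S : Set C) := huniv ▸ Set.mem_univ _
  exact this

/-- A compact group with a nonzero fixed functional `f` has a nonzero fixed vector: average over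
the group a vector `v` with `f v = 1`. -/
theorem exists_fixed_of_vecMul_eq {C : Subgroup (GL (Fin d) ℝ)}
    (hC : IsCompact (C : Set (GL (Fin d) ℝ))) {f : Fin d → ℝ} (hf0 : f ≠ 0)
    (hf : ∀ g ∈ C, f ᵥ* (g : Matrix (Fin d) (Fin d) ℝ) = f) :
    ∃ w ≠ 0, ∀ g ∈ C, (g : Matrix (Fin d) (Fin d) ℝ) *ᵥ w = w := by
  have : CompactSpace C := isCompact_iff_compactSpace.1 hC
  let _ : MeasurableSpace C := borel C
  have : BorelSpace C := ⟨rfl⟩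
  obtain ⟨v, hv⟩ : ∃ v, f ⬝ᵥ v ≠ 0 := ⟨f, by rwa [Ne, dotProduct_self_eq_zero]⟩
  let μ : Measure C := Measure.haar
  let φ : C → (Fin d → ℝ) := fun g => ((g : GL (Fin d) ℝ) : Matrix (Fin d) (Fin d) ℝ) *ᵥ v
  have hφc : Continuous φ :=
    (Units.continuous_val.comp continuous_subtype_val).matrix_mulVec continuous_const
  have hφ : Integrable φ μ := hφc.integrable_of_hasCompactSupport
    (HasCompactSupport.of_compactSpace _)
  refine ⟨∫ g, φ g ∂μ, fun h0 => ?_, fun g hg => ?_⟩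
  · let L : (Fin d → ℝ) →L[ℝ] ℝ := LinearMap.toContinuousLinearMap (dotProductEquiv ℝ (Fin d) f)
    have h1 := L.integral_comp_comm hφ
    rw [h0, map_zero] at h1
    have h2 : ∀ g, L (φ g) = f ⬝ᵥ v := by
      intro g
      change f ⬝ᵥ (_ *ᵥ v) = _
      rw [Matrix.dotProduct_mulVec, hf _ g.2]
    simp only [h2, integral_const, smul_eq_mul] at h1
    refine (mul_ne_zero ?_ hv) h1
    rw [measureReal_def]
    exact (ENNReal.toReal_pos (IsOpen.measure_ne_zero μ isOpen_univ ⟨1, trivial⟩)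
      (measure_ne_top μ _)).ne'
  · let L : (Fin d → ℝ) →L[ℝ] (Fin d → ℝ) :=
      LinearMap.toContinuousLinearMap (Matrix.mulVecLin (g : Matrix (Fin d) (Fin d) ℝ))
    have h1 := L.integral_comp_comm hφ
    change _ = (g : Matrix (Fin d) (Fin d) ℝ) *ᵥ _ at h1
    rw [← h1, ← integral_mul_left_eq_self φ (⟨g, hg⟩ : C)]
    refine integral_congr_ae (Eventually.of_forall fun a => ?_)
    change (g : Matrix (Fin d) (Fin d) ℝ) *ᵥ (_ *ᵥ v) =
      ((g * a : GL (Fin d) ℝ) : Matrix _ _ ℝ) *ᵥ v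
    rw [Matrix.mulVec_mulVec, Units.val_mul]

/-- If `𝔠` is the set of generators of `C`, then `𝔠 V` spans `V`; equivalently, for a proper
subspace `W` the subspace `{v | 𝔠 v ⊆ W}` is proper. A functional vanishing on `𝔠 V` would be
fixed by `C`, producing a fixed vector. -/
theorem exists_mulVec_notMem {C : Subgroup (GL (Fin d) ℝ)}
    (hC : IsCompact (C : Set (GL (Fin d) ℝ))) (hconn : IsConnected (C : Set (GL (Fin d) ℝ)))
    (hfix : ∀ v : Fin d → ℝ,
      (∀ g ∈ C, Matrix.mulVec (g : Matrix (Fin d) (Fin d) ℝ) v = v) → v = 0)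
    {W : Submodule ℝ (Fin d → ℝ)} (hW : W ≠ ⊤) :
    ∃ X ∈ oneParamGen C, ∃ v, (X : Matrix (Fin d) (Fin d) ℝ) *ᵥ v ∉ W := by
  by_contra! hcon
  obtain ⟨F, hF0, hF⟩ := Submodule.exists_le_ker_of_lt_top W hW.lt_top
  obtain ⟨f, rfl⟩ := (dotProductEquiv ℝ (Fin d)).surjective F
  have hf0 : f ≠ 0 := by rintro rfl; simp at hF0
  obtain ⟨w, hw0, hw⟩ := exists_fixed_of_vecMul_eq hC hf0
    (vecMul_eq_of_oneParamGen hC hconn fun X hX => by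
      refine dotProduct_eq_zero _ fun v => ?_
      rw [← Matrix.dotProduct_mulVec]
      exact hF (hcon X hX v))
  exact hw0 (hfix w hw)

/-- Finitely many generators suffice: take a basis of their span. -/
theorem exists_finite_generators {C : Subgroup (GL (Fin d) ℝ)}
    (hC : IsCompact (C : Set (GL (Fin d) ℝ))) (hconn : IsConnected (C : Set (GL (Fin d) ℝ)))
    (hfix : ∀ v : Fin d → ℝ,
      (∀ g ∈ C, Matrix.mulVec (g : Matrix (Fin d) (Fin d) ℝ) v = v) → v = 0) :
    ∃ T ⊆ oneParamGen C, T.Finite ∧ ∀ W : Submodule ℝ (Fin d → ℝ), W ≠ ⊤ →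
      ∃ X ∈ T, ∃ v, (X : Matrix (Fin d) (Fin d) ℝ) *ᵥ v ∉ W := by
  obtain ⟨T, hT, hspan, hli⟩ := exists_linearIndependent ℝ (oneParamGen C)
  refine ⟨T, hT, hli.setFinite, fun W hW => ?_⟩
  by_contra! hcon
  obtain ⟨X, hX, v, hv⟩ := exists_mulVec_notMem hC hconn hfix hW
  have hle : Submodule.span ℝ T ≤ W.comap ((Matrix.mulVecBilin ℝ ℝ).flip v) :=
    Submodule.span_le.2 fun Y hY => hcon Y hY v
  exact hv (hle (hspan ▸ Submodule.subset_span hX))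

/-! ### Generic independence and absolute continuity -/

theorem hasStrictFDerivAt_sum_exp_smul_mulVec (X : Fin d → Matrix (Fin d) (Fin d) ℝ)
    (v : Fin d → Fin d → ℝ) (t : Fin d → ℝ) :
    HasStrictFDerivAt (fun t : Fin d → ℝ => ∑ i, NormedSpace.exp (t i • X i) *ᵥ v i)
      (∑ i, (ContinuousLinearMap.proj (R := ℝ) (φ := fun _ : Fin d => ℝ) i).smulRight
        (X i *ᵥ (NormedSpace.exp (t i • X i) *ᵥ v i))) t := by
  refine HasStrictFDerivAt.fun_sum fun i _ => ?_
  let L : Matrix (Fin d) (Fin d) ℝ →L[ℝ] (Fin d → ℝ) :=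
    LinearMap.toContinuousLinearMap ((Matrix.mulVecBilin ℝ ℝ).flip (v i))
  have h1 : HasStrictDerivAt (fun s : ℝ => NormedSpace.exp (s • X i) *ᵥ v i)
      ((X i * NormedSpace.exp (t i • X i)) *ᵥ v i) (t i) :=
    L.hasStrictFDerivAt.comp_hasStrictDerivAt (t i) (hasStrictDerivAt_exp_smul_const' (X i) (t i))
  rw [← Matrix.mulVec_mulVec] at h1
  have h2 := h1.hasStrictFDerivAt.comp t
    (ContinuousLinearMap.proj (R := ℝ) (φ := fun _ : Fin d => ℝ) i).hasStrictFDerivAt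
  have e : (ContinuousLinearMap.proj (R := ℝ) (φ := fun _ : Fin d => ℝ) i).smulRight
      (X i *ᵥ (NormedSpace.exp (t i • X i) *ᵥ v i)) =
      (ContinuousLinearMap.toSpanSingleton ℝ (X i *ᵥ NormedSpace.exp (t i • X i) *ᵥ v i)).comp
        (ContinuousLinearMap.proj (R := ℝ) (φ := fun _ : Fin d => ℝ) i) := by
    ext1 s
    simp
  rw [e]
  exact h2

theorem det_sum_smulRight_ne_zero {w : Fin d → Fin d → ℝ} (hw : LinearIndependent ℝ w) :
    (∑ i, (ContinuousLinearMap.proj (R := ℝ) (φ := fun _ : Fin d => ℝ) i).smulRight (w i)).det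
      ≠ 0 := by
  intro h0
  obtain ⟨s, hs, hs0⟩ := (Submodule.ne_bot_iff _).1 (LinearMap.bot_lt_ker_of_det_eq_zero h0).ne'
  refine hs0 (funext fun i => Fintype.linearIndependent_iff.1 hw s ?_ i)
  simpa using hs

theorem isOpen_linearIndependent_mulVec {n : ℕ} (X : Fin n → Matrix (Fin d) (Fin d) ℝ) :
    IsOpen {v : Fin n → Fin d → ℝ | LinearIndependent ℝ fun i => X i *ᵥ v i} := by
  have h : Continuous fun (v : Fin n → Fin d → ℝ) i => X i *ᵥ v i :=
    continuous_pi fun i => continuous_const.matrix_mulVec (continuous_apply i)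
  exact isOpen_setOfPred_linearIndependent.preimage h

theorem continuous_finCons_swap (n : ℕ) :
    Continuous fun p : (Fin n → Fin d → ℝ) × (Fin d → ℝ) =>
      (Fin.cons p.2 p.1 : Fin (n + 1) → Fin d → ℝ) :=
  continuous_pi fun i => Fin.cases continuous_snd
    (fun j => (continuous_apply j).comp continuous_fst) i

variable {lam : Measure (Fin d → ℝ)} [IsProbabilityMeasure lam]

/-- Almost surely, generators can be chosen one after the other so that the vectors `X i *ᵥ v i`
are independent: as long as their span `W` is proper, the next `v` avoids the proper subspace
`{v | 𝔠 v ⊆ W}`. -/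
theorem ae_exists_linearIndependent {T : Set (Matrix (Fin d) (Fin d) ℝ)} (hT : T.Finite)
    (hgen : ∀ W : Submodule ℝ (Fin d → ℝ), W ≠ ⊤ → ∃ X ∈ T, ∃ v, X *ᵥ v ∉ W)
    (hnull : ∀ W : Submodule ℝ (Fin d → ℝ), W ≠ ⊤ → lam (W : Set (Fin d → ℝ)) = 0)
    (n : ℕ) (hn : n ≤ d) :
    ∀ᵐ v ∂(Measure.pi fun _ : Fin n => lam),
      ∃ σ : Fin n → T, LinearIndependent ℝ fun i => (σ i : Matrix (Fin d) (Fin d) ℝ) *ᵥ v i := by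
  have : Finite T := hT
  induction n with
  | zero => exact Eventually.of_forall fun v => ⟨Fin.elim0, linearIndependent_empty_type⟩
  | succ n ih =>
    have hmeas : MeasurableSet {p : (Fin n → Fin d → ℝ) × (Fin d → ℝ) |
        ∃ σ : Fin (n + 1) → T, LinearIndependent ℝ
          fun i => (σ i : Matrix (Fin d) (Fin d) ℝ) *ᵥ
            (Fin.cons p.2 p.1 : Fin (n + 1) → Fin d → ℝ) i} := by
      have hopen := isOpen_iUnion fun σ : Fin (n + 1) → T =>
        (isOpen_linearIndependent_mulVec fun i => (σ i : Matrix (Fin d) (Fin d) ℝ)).preimage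
          (continuous_finCons_swap n)
      convert hopen.measurableSet
      ext
      simp
    have hprod : ∀ᵐ p ∂((Measure.pi fun _ : Fin n => lam).prod lam),
        ∃ σ : Fin (n + 1) → T, LinearIndependent ℝ
          fun i => (σ i : Matrix (Fin d) (Fin d) ℝ) *ᵥ
            (Fin.cons p.2 p.1 : Fin (n + 1) → Fin d → ℝ) i := by
      rw [Measure.ae_prod_iff_ae_ae hmeas]
      filter_upwards [ih (by omega)] with v ⟨σ, hσ⟩
      set W := Submodule.span ℝ (Set.range fun i => (σ i : Matrix (Fin d) (Fin d) ℝ) *ᵥ v i) with hW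
      have hWtop : W ≠ ⊤ := by
        intro h
        have h1 : Module.finrank ℝ W ≤ _ :=
          finrank_range_le_card (R := ℝ) (fun i => (σ i : Matrix (Fin d) (Fin d) ℝ) *ᵥ v i)
        rw [h, finrank_top, Module.finrank_fin_fun, Fintype.card_fin] at h1
        omega
      obtain ⟨X, hX, u, hu⟩ := hgen W hWtop
      have hnu := hnull (W.comap (Matrix.mulVecLin X)) (fun h =>
        hu (show u ∈ W.comap (Matrix.mulVecLin X) from h ▸ Submodule.mem_top))
      filter_upwards [compl_mem_ae_iff.2 hnu] with x hx
      refine ⟨Fin.cons ⟨X, hX⟩ σ, ?_⟩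
      have e : (fun i => ((Fin.cons ⟨X, hX⟩ σ : Fin (n + 1) → T) i : Matrix (Fin d) (Fin d) ℝ) *ᵥ
          (Fin.cons x v : Fin (n + 1) → Fin d → ℝ) i)
          = (Fin.cons (X *ᵥ x) fun i => (σ i : Matrix (Fin d) (Fin d) ℝ) *ᵥ v i :
            Fin (n + 1) → Fin d → ℝ) := by
        ext i : 1
        refine Fin.cases ?_ (fun j => ?_) i <;> simp
      simp only [e]
      exact linearIndependent_finCons.2 ⟨hσ, hx⟩
    have hmp := (Measure.measurePreserving_swap (μ := lam)
      (ν := Measure.pi fun _ : Fin n => lam)).comp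
      (measurePreserving_piFinSuccAbove (fun _ : Fin (n + 1) => lam) 0)
    filter_upwards [hmp.quasiMeasurePreserving.ae hprod] with v hv
    obtain ⟨σ, hσ⟩ := hv
    refine ⟨σ, ?_⟩
    convert hσ using 3 with i
    refine Fin.cases ?_ (fun j => ?_) i <;>
      simp [MeasurableEquiv.piFinSuccAbove, Fin.tail]

/-- Fix generators `X i`, and let `t` parametrise the measure-preserving maps
`v ↦ (exp (t i X i) v i)`. For each `v`, the map `t ↦ ∑ i, exp (t i X i) v i` has invertible
derivative as long as `X i exp (t i X i) v i` are independent, so almost no such `t` hits the null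
set `A`. By Fubini some `t` works for almost all `v`, and invariance of `lam` removes it. -/
theorem pi_null_of_linearIndependent {C : Subgroup (GL (Fin d) ℝ)}
    (hinv : ∀ g ∈ C,
      lam.map (fun v => Matrix.mulVec (g : Matrix (Fin d) (Fin d) ℝ) v) = lam)
    {X : Fin d → Matrix (Fin d) (Fin d) ℝ} (hX : ∀ i, X i ∈ oneParamGen C)
    {A : Set (Fin d → ℝ)} (hA : MeasurableSet A) (hA0 : volume A = 0) :
    Measure.pi (fun _ : Fin d => lam)
      {v | ∑ i, v i ∈ A ∧ LinearIndependent ℝ fun i => X i *ᵥ v i} = 0 := by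
  set B : Set (Fin d → Fin d → ℝ) :=
    {v | ∑ i, v i ∈ A ∧ LinearIndependent ℝ fun i => X i *ᵥ v i} with hB
  have hBm : MeasurableSet B := by
    have h1 : Measurable fun v : Fin d → Fin d → ℝ => ∑ i, v i := by fun_prop
    exact (h1 hA).inter (isOpen_linearIndependent_mulVec X).measurableSet
  let Φ : (Fin d → ℝ) → (Fin d → Fin d → ℝ) → (Fin d → Fin d → ℝ) :=
    fun t v i => NormedSpace.exp (t i • X i) *ᵥ v i
  have hΦ : Continuous fun p : (Fin d → Fin d → ℝ) × (Fin d → ℝ) => Φ p.2 p.1 :=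
    continuous_pi fun i =>
      ((continuous_exp_smul (X i)).comp ((continuous_apply i).comp continuous_snd)).matrix_mulVec
        ((continuous_apply i).comp continuous_fst)
  have hΦmp : ∀ t, MeasurePreserving (Φ t) (Measure.pi fun _ : Fin d => lam)
      (Measure.pi fun _ : Fin d => lam) := by
    intro t
    refine measurePreserving_pi _ _ (f := fun i u => NormedSpace.exp (t i • X i) *ᵥ u) fun i => ?_
    obtain ⟨g, hg, e⟩ := hX i (t i)
    have e' : (fun u : Fin d → ℝ => NormedSpace.exp (t i • X i) *ᵥ u)
        = fun u => (g : Matrix (Fin d) (Fin d) ℝ) *ᵥ u :=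
      funext fun u => congrArg (· *ᵥ u) e.symm
    rw [e']
    exact ⟨(continuous_const.matrix_mulVec continuous_id).measurable, hinv g hg⟩
  have hm : MeasurableSet {p : (Fin d → Fin d → ℝ) × (Fin d → ℝ) | Φ p.2 p.1 ∈ B} :=
    hΦ.measurable hBm
  have hprod : ((Measure.pi fun _ : Fin d => lam).prod (volume : Measure (Fin d → ℝ)))
      {p | Φ p.2 p.1 ∈ B} = 0 := by
    rw [Measure.measure_prod_null hm]
    refine Eventually.of_forall fun v => ?_
    refine volume_preimage_null (hasStrictFDerivAt_sum_exp_smul_mulVec X v) hA0 ?_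
      (fun t ht => ht.1) fun t ht => det_sum_smulRight_ne_zero ht.2
    exact measurable_prodMk_left hm
  rw [Measure.prod_apply_symm hm] at hprod
  have hconst : ∀ t, Measure.pi (fun _ : Fin d => lam)
      ((fun v => (v, t)) ⁻¹' {p | Φ p.2 p.1 ∈ B}) = Measure.pi (fun _ : Fin d => lam) B :=
    fun t => (hΦmp t).measure_preimage hBm.nullMeasurableSet
  simp only [hconst, lintegral_const, mul_eq_zero] at hprod
  exact hprod.resolve_right (IsOpen.measure_ne_zero _ isOpen_univ ⟨0, trivial⟩)

end LinearGroup

/-- Let `V = ℝ^d`, `d ≥ 2`, and `C` a compact connected subgroup of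
`GL(d,ℝ)` with no nonzero fixed vector.  If `lam` is a `C`-invariant Borel probability
measure on `V` giving measure zero to every proper vector subspace, then the `d`-fold
convolution power `lam^d` is absolutely continuous with respect to Lebesgue measure. -/
theorem stmt1 (d : ℕ) (hd : 2 ≤ d)
    (C : Subgroup (GL (Fin d) ℝ))
    (hCcompact : IsCompact (C : Set (GL (Fin d) ℝ)))
    (hCconn : IsConnected (C : Set (GL (Fin d) ℝ)))
    (hfix : ∀ v : Fin d → ℝ,
      (∀ g ∈ C, Matrix.mulVec (g : Matrix (Fin d) (Fin d) ℝ) v = v) → v = 0)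
    (lam : Measure (Fin d → ℝ)) [IsProbabilityMeasure lam]
    (hinv : ∀ g ∈ C,
      lam.map (fun v => Matrix.mulVec (g : Matrix (Fin d) (Fin d) ℝ) v) = lam)
    (hnull : ∀ W : Submodule ℝ (Fin d → ℝ), W ≠ ⊤ → lam (W : Set (Fin d → ℝ)) = 0) :
    addConvPow lam d ≪ (volume : Measure (Fin d → ℝ)) := by
  obtain ⟨T, hT, hTfin, hgen⟩ := exists_finite_generators hCcompact hCconn hfix
  have : Finite T := hTfin
  refine Measure.AbsolutelyContinuous.mk fun A hA hA0 => ?_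
  rw [addConvPow_eq_map_pi, Measure.map_apply (by fun_prop) hA]
  refine measure_mono_null (t := {v | ¬ ∃ σ : Fin d → T,
      LinearIndependent ℝ fun i => (σ i : Matrix (Fin d) (Fin d) ℝ) *ᵥ v i} ∪
    ⋃ σ : Fin d → T, {v | ∑ i, v i ∈ A ∧
      LinearIndependent ℝ fun i => (σ i : Matrix (Fin d) (Fin d) ℝ) *ᵥ v i}) (fun v hv => ?_) ?_
  · by_cases h : ∃ σ : Fin d → T,
        LinearIndependent ℝ fun i => (σ i : Matrix (Fin d) (Fin d) ℝ) *ᵥ v i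
    · obtain ⟨σ, hσ⟩ := h
      exact Or.inr (Set.mem_iUnion.2 ⟨σ, hv, hσ⟩)
    · exact Or.inl h
  · exact measure_union_null (ae_exists_linearIndependent hTfin hgen hnull d le_rfl)
      (measure_iUnion_null fun σ =>
        pi_null_of_linearIndependent hinv (fun i => hT (σ i).2) hA hA0)
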